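/- Suppose v_0^n = x^n ∈ ℝ^{N_in} (so K_0 = N_in), and suppose Assumption 2 (ℓ differentiable and convex in its first argument), Assumption 3 (M ≥ N_o), and Assumption 4 (the linear map (c_0,…,c_{L−1}) ↦ Σ_{i=0}^{L−1} W_i c_i is injective) hold. If moreover the infimum of the A-ResNEst risk A(H_0,…,H_L) over all (H_0,…,H_L) is strictly smaller than the infimum of A(H_0, 0,…,0) over all H_0 ∈ ℝ^{N_o×N_in}, then every local minimizer (W_L*, W_{L+1}*) of the fixed-feature ResNEst empirical risk R satisfies the strict inequality R(W_L*, W_{L+1}*) < (1/N) Σ_{n=1}^N ℓ(A x^n, y^n) for every matrix A ∈ ℝ^{N_o×N_in}. -/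

import Mathlib

/-!
STATEMENT 8 (Corollary 2(b)): Under Assumptions 2, 3 and 4, if the infimum of the
A-ResNEst risk over all (H_0, …, H_L) is strictly smaller than the infimum over
linear-only predictors (H_0, 0, …, 0), then every local minimizer of the
fixed-feature ResNEst risk `R` is strictly better than every linear predictor.
-/

attribute [local instance] Matrix.normedAddCommGroup Matrix.normedSpace

/-!
Stack the samples as the columns of matrices: the features entering the last block form `V`, the
accumulated residual is `U`, and the risk at `(C, B)` is `Φ (B * (U + C * V))` for a convex
function `Φ`. Write `Z` for the prediction matrix at a local minimizer and `Φ'` for the derivative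
of `Φ` there. Varying one factor at a time gives `Φ' (B * F * V) = 0` and
`Φ' (E * (U + C * V)) = 0`. To conclude that `Φ'` vanishes on every `H * V`, write `H = B * F` if
`B` has a right inverse. Otherwise, as `B` has no more rows than columns, it kills some `w ≠ 0`, and
moving `C` in a direction `F` with columns in `ℝ w` leaves `Z` unchanged: nearby points are again
local minimizers with the same derivative `Φ'`, and comparing their conditions gives
`Φ' (E * F * V) = 0`. Hence `Φ'` vanishes on every `G * U + H * V`, and convexity makes `Z` optimal
among these predictions. By injectivity of `c ↦ ∑ i, W i *ᵥ c i`, they include every prediction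
`∑ i, H i * X i + H' * V` of the A-ResNEst, where `U = ∑ i, W i * X i`.
-/

open Filter Topology Matrix

lemma eventually_isLocalMin_of_eq {X β : Type*} [TopologicalSpace X] [Preorder β]
    {f : X → β} {a : X} (h : IsLocalMin f a) : ∀ᶠ b in 𝓝 a, f b = f a → IsLocalMin f b := by
  filter_upwards [eventually_eventually_nhds.mpr h] with b hb hba
  simpa only [IsLocalMin, IsMinFilter, hba] using hb

lemma convexOn_add_hasLineDerivAt_le {E : Type*} [AddCommGroup E] [Module ℝ E] {s : Set E}
    {f : E → ℝ} {f' : ℝ} {x y : E} (hf : ConvexOn ℝ s f) (hx : x ∈ s) (hy : y ∈ s)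
    (h : HasLineDerivAt ℝ f f' x (y - x)) : f x + f' ≤ f y := by
  have hline : ConvexOn ℝ (AffineMap.lineMap x y ⁻¹' s) (f ∘ AffineMap.lineMap x y) :=
    hf.comp_affineMap (AffineMap.lineMap (k := ℝ) x y)
  have hderiv : HasDerivAt (f ∘ AffineMap.lineMap (k := ℝ) x y) f' 0 := by
    simpa only [HasLineDerivAt, Function.comp_def, AffineMap.lineMap_apply_module', add_comm]
      using h
  have hslope := hline.le_slope_of_hasDerivAt (x := 0) (y := 1) (by simpa) (by simpa) one_pos hderiv
  simp only [slope_def_field, Function.comp_apply, AffineMap.lineMap_apply_zero,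
    AffineMap.lineMap_apply_one, sub_zero, div_one] at hslope
  linarith

lemma lt_of_forall_le_of_ciInf_lt_ciInf {ι κ α : Type*} [Nonempty ι]
    [ConditionallyCompleteLattice α] {f : ι → α} {g : κ → α} {a : α} (hf : ∀ i, a ≤ f i)
    (hg : ∀ j, a ≤ g j) (hfg : ⨅ i, f i < ⨅ j, g j) (j : κ) : a < g j :=
  calc
    a ≤ ⨅ i, f i := le_ciInf hf
    _ < ⨅ j, g j := hfg
    _ ≤ g j := ciInf_le ⟨a, Set.forall_mem_range.mpr hg⟩ j

section LinearAlgebra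

variable {𝕜 m o : Type*} [Field 𝕜] [Fintype m]

lemma exists_right_inverse_or_exists_mulVec_eq_zero [Fintype o] [DecidableEq o]
    (hcard : Fintype.card o ≤ Fintype.card m) (B : Matrix o m 𝕜) :
    (∃ S : Matrix m o 𝕜, B * S = 1) ∨ ∃ w ≠ 0, B *ᵥ w = 0 := by
  rw [← mulVec_surjective_iff_exists_right_inverse, or_iff_not_imp_right]
  intro hker
  have hinj : Function.Injective B.mulVecLin :=
    (injective_iff_map_eq_zero _).mpr fun w hw => by_contra fun hw0 => hker ⟨w, hw0, hw⟩
  have hrange : LinearMap.range B.mulVecLin = ⊤ := by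
    apply Submodule.eq_top_of_finrank_eq
    apply le_antisymm (Submodule.finrank_le _)
    rw [LinearMap.finrank_range_of_inj hinj]
    simpa using hcard
  exact LinearMap.range_eq_top.mp hrange

lemma exists_mul_eq_of_injective_sum_mulVec {ι : Type*} [Fintype ι] {k : ι → Type*}
    [∀ i, Fintype (k i)] {W : ∀ i, Matrix m (k i) 𝕜}
    (hW : Function.Injective fun c : ∀ i, k i → 𝕜 => ∑ i, W i *ᵥ c i)
    (H : ∀ i, Matrix o (k i) 𝕜) : ∃ G : Matrix o m 𝕜, ∀ i, G * W i = H i := by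
  classical
  let T : (∀ i, k i → 𝕜) →ₗ[𝕜] m → 𝕜 := LinearMap.lsum 𝕜 _ 𝕜 fun i => (W i).mulVecLin
  let S : (∀ i, k i → 𝕜) →ₗ[𝕜] o → 𝕜 := LinearMap.lsum 𝕜 _ 𝕜 fun i => (H i).mulVecLin
  have hT : Function.Injective T := by
    convert hW using 2 with c
    simp [T]
  obtain ⟨g, hg⟩ := T.exists_leftInverse_of_injective (LinearMap.ker_eq_bot.mpr hT)
  refine ⟨LinearMap.toMatrix' (S ∘ₗ g), fun i => ext_iff_mulVec.mpr fun c => ?_⟩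
  have hTc : T (Pi.single i c) = W i *ᵥ c := LinearMap.lsum_piSingle ..
  have hSc : S (Pi.single i c) = H i *ᵥ c := LinearMap.lsum_piSingle ..
  rw [← mulVec_mulVec, LinearMap.toMatrix'_mulVec, ← hTc, ← hSc]
  exact congrArg S (LinearMap.congr_fun hg _)

lemma sum_update_zero_mul {ι R s : Type*} [Fintype ι] [DecidableEq ι] [NonUnitalNonAssocSemiring R]
    {k : ι → Type*} [∀ i, Fintype (k i)] (i : ι) (H : Matrix o (k i) R)
    (V : ∀ j, Matrix (k j) s R) :
    ∑ j, (Function.update 0 i H : ∀ j, Matrix o (k j) R) j * V j = H * V i := by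
  rw [Fintype.sum_eq_single i fun j hj => by simp [Function.update_of_ne hj],
    Function.update_self]

end LinearAlgebra

section ResNEst

variable {s k m o : Type*} [Fintype k] [Fintype m]

/-- The predictions of a ResNEst with fixed features, one column per sample. The columns of `U` are
the residual representations entering the last block, those of `V` the features of that block, and
the parameters `p = (C, B)` are the last block matrix `W_L` and the output matrix `W_{L+1}`. -/
def resnestOutput (U : Matrix m s ℝ) (V : Matrix k s ℝ) (p : Matrix m k ℝ × Matrix o m ℝ) :
    Matrix o s ℝ :=
  p.2 * (U + p.1 * V)

variable {Φ : Matrix o s ℝ → ℝ} {Φ' : Matrix o s ℝ →ₗ[ℝ] ℝ} {U : Matrix m s ℝ}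
  {V : Matrix k s ℝ} {p : Matrix m k ℝ × Matrix o m ℝ}

lemma isLocalMin_resnest_deriv_block_eq_zero
    (hΦ : ∀ D, HasLineDerivAt ℝ Φ (Φ' D) (resnestOutput U V p) D)
    (hmin : IsLocalMin (Φ ∘ resnestOutput U V) p) (F : Matrix m k ℝ) :
    Φ' (p.2 * F * V) = 0 := by
  have hline (t : ℝ) : resnestOutput U V (p + t • (F, 0)) =
      resnestOutput U V p + t • (p.2 * F * V) := by
    simp [resnestOutput, Matrix.add_mul, Matrix.mul_add, Matrix.mul_assoc, add_assoc]
  apply hmin.hasLineDerivAt_eq_zero (b := (F, 0))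
  simpa only [HasLineDerivAt, Function.comp_apply, hline] using hΦ (p.2 * F * V)

lemma isLocalMin_resnest_deriv_output_eq_zero
    (hΦ : ∀ D, HasLineDerivAt ℝ Φ (Φ' D) (resnestOutput U V p) D)
    (hmin : IsLocalMin (Φ ∘ resnestOutput U V) p) (E : Matrix o m ℝ) :
    Φ' (E * (U + p.1 * V)) = 0 := by
  have hline (t : ℝ) : resnestOutput U V (p + t • (0, E)) =
      resnestOutput U V p + t • (E * (U + p.1 * V)) := by
    simp [resnestOutput, Matrix.add_mul]
  apply hmin.hasLineDerivAt_eq_zero (b := (0, E))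
  simpa only [HasLineDerivAt, Function.comp_apply, hline] using hΦ (E * (U + p.1 * V))

lemma isLocalMin_resnest_deriv_eq_zero_of_mul_eq_zero
    (hΦ : ∀ D, HasLineDerivAt ℝ Φ (Φ' D) (resnestOutput U V p) D)
    (hmin : IsLocalMin (Φ ∘ resnestOutput U V) p) {F : Matrix m k ℝ} (hF : p.2 * F = 0)
    (E : Matrix o m ℝ) : Φ' (E * F * V) = 0 := by
  have houtput (t : ℝ) : resnestOutput U V (p.1 + t • F, p.2) = resnestOutput U V p := by
    simp [resnestOutput, Matrix.mul_add, Matrix.add_mul, ← Matrix.mul_assoc, hF]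
  have hpath : Tendsto (fun t : ℝ => (p.1 + t • F, p.2)) (𝓝[≠] 0) (𝓝 p) :=
    (Continuous.tendsto' (by fun_prop) _ _ (by simp)).mono_left nhdsWithin_le_nhds
  have hnear : ∀ᶠ t : ℝ in 𝓝[≠] 0, IsLocalMin (Φ ∘ resnestOutput U V) (p.1 + t • F, p.2) :=
    (hpath.eventually (eventually_isLocalMin_of_eq hmin)).mono
      fun t ht => ht (congrArg Φ (houtput t))
  obtain ⟨t, hmin_t, ht : t ≠ 0⟩ := (hnear.and self_mem_nhdsWithin).exists
  have hE := isLocalMin_resnest_deriv_output_eq_zero hΦ hmin E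
  have hE_t := isLocalMin_resnest_deriv_output_eq_zero ((houtput t).symm ▸ hΦ) hmin_t E
  have hdiff : E * (U + (p.1 + t • F) * V) = E * (U + p.1 * V) + t • (E * F * V) := by
    simp [Matrix.add_mul, Matrix.mul_add, Matrix.mul_assoc, add_assoc]
  rw [hdiff, map_add, hE, zero_add, map_smul, smul_eq_mul] at hE_t
  exact (mul_eq_zero.mp hE_t).resolve_left ht

variable [Fintype o]

lemma isLocalMin_resnest_deriv_features_eq_zero (hcard : Fintype.card o ≤ Fintype.card m)
    (hΦ : ∀ D, HasLineDerivAt ℝ Φ (Φ' D) (resnestOutput U V p) D)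
    (hmin : IsLocalMin (Φ ∘ resnestOutput U V) p) (H : Matrix o k ℝ) :
    Φ' (H * V) = 0 := by
  classical
  obtain ⟨S, hS⟩ | ⟨w, hw, hpw⟩ := exists_right_inverse_or_exists_mulVec_eq_zero hcard p.2
  · simpa [← Matrix.mul_assoc, hS] using isLocalMin_resnest_deriv_block_eq_zero hΦ hmin (S * H)
  · have hww : w ⬝ᵥ w ≠ 0 := by simpa [dotProduct_self_eq_zero] using hw
    have hrank_one (e : o → ℝ) (a : k → ℝ) : Φ' (vecMulVec e a * V) = 0 := by
      have hfactor : vecMulVec e ((w ⬝ᵥ w)⁻¹ • w) * vecMulVec w a = vecMulVec e a := by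
        simp [vecMulVec_mul_vecMulVec, hww]
      rw [← hfactor]
      exact isLocalMin_resnest_deriv_eq_zero_of_mul_eq_zero hΦ hmin
        (by rw [mul_vecMulVec, hpw, zero_vecMulVec]) _
    induction H using Matrix.induction_on' with
    | h_zero => simp
    | h_add H₁ H₂ h₁ h₂ => rw [Matrix.add_mul, map_add, h₁, h₂, add_zero]
    | h_std_basis i j c =>
      rw [← mul_one c, ← smul_eq_mul, ← smul_single, single_eq_single_vecMulVec_single]
      simp [hrank_one]

theorem isLocalMin_resnest_le (hconv : ConvexOn ℝ Set.univ Φ)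
    (hΦ : ∀ D, HasLineDerivAt ℝ Φ (Φ' D) (resnestOutput U V p) D)
    (hcard : Fintype.card o ≤ Fintype.card m) (hmin : IsLocalMin (Φ ∘ resnestOutput U V) p)
    (G : Matrix o m ℝ) (H : Matrix o k ℝ) :
    Φ (resnestOutput U V p) ≤ Φ (G * U + H * V) := by
  have hdir : G * U + H * V - resnestOutput U V p =
      (G - p.2) * (U + p.1 * V) + (H - G * p.1) * V := by
    simp only [resnestOutput, Matrix.sub_mul, Matrix.mul_add, Matrix.mul_assoc]
    abel
  have hstationary : Φ' (G * U + H * V - resnestOutput U V p) = 0 := by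
    rw [hdir, map_add, isLocalMin_resnest_deriv_output_eq_zero hΦ hmin,
      isLocalMin_resnest_deriv_features_eq_zero hcard hΦ hmin, add_zero]
  have hgrad := convexOn_add_hasLineDerivAt_le hconv (Set.mem_univ _) (Set.mem_univ _)
    (hΦ (G * U + H * V - resnestOutput U V p))
  rwa [hstationary, add_zero] at hgrad

theorem isLocalMin_resnest_le_aresnest {ι : Type*} [Fintype ι] {κ : ι → Type*}
    [∀ i, Fintype (κ i)] {W : ∀ i, Matrix m (κ i) ℝ} {X : ∀ i, Matrix (κ i) s ℝ}
    (hinj : Function.Injective fun c : ∀ i, κ i → ℝ => ∑ i, W i *ᵥ c i)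
    (hU : U = ∑ i, W i * X i) (hconv : ConvexOn ℝ Set.univ Φ)
    (hΦ : ∀ D, HasLineDerivAt ℝ Φ (Φ' D) (resnestOutput U V p) D)
    (hcard : Fintype.card o ≤ Fintype.card m) (hmin : IsLocalMin (Φ ∘ resnestOutput U V) p)
    (H : ∀ i, Matrix o (κ i) ℝ) (H' : Matrix o k ℝ) :
    Φ (resnestOutput U V p) ≤ Φ (∑ i, H i * X i + H' * V) := by
  obtain ⟨G, hG⟩ := exists_mul_eq_of_injective_sum_mulVec hinj H
  have hsum : ∑ i, H i * X i = G * U := by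
    simp only [hU, Matrix.mul_sum, ← Matrix.mul_assoc, hG]
  rw [hsum]
  exact isLocalMin_resnest_le hconv hΦ hcard hmin G H'

end ResNEst

/-- Extraction of the `n`-th column, as a linear map: the prediction for sample `n` is this linear
function of the matrix of all predictions. -/
def colLinearMap (R : Type*) {s o : Type*} [Semiring R] (n : s) : Matrix o s R →ₗ[R] o → R where
  toFun Z := Z.col n
  map_add' _ _ := rfl
  map_smul' _ _ := rfl

lemma col_sum_mul {R ι s o : Type*} [Semiring R] [Fintype ι] {k : ι → Type*}
    [∀ i, Fintype (k i)] (H : ∀ i, Matrix o (k i) R) (V : ∀ i, Matrix (k i) s R) (n : s) :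
    (∑ i, H i * V i).col n = ∑ i, H i *ᵥ (V i).col n :=
  map_sum (colLinearMap R n) _ _

section EmpiricalRisk

variable {s o τ : Type*} [Fintype s]

/-- The mean over the samples `n` of the loss `ℓ` of the prediction in column `n` of `Z` against the
target `y n`, read as `0` if there are no samples. -/
noncomputable def empiricalRisk (ℓ : (o → ℝ) → τ → ℝ) (y : s → τ) (Z : Matrix o s ℝ) : ℝ :=
  (1 / (Fintype.card s : ℝ)) * ∑ n, ℓ (Z.col n) (y n)

variable {ℓ : (o → ℝ) → τ → ℝ}

lemma convexOn_empiricalRisk (hℓ : ∀ z, ConvexOn ℝ Set.univ fun q => ℓ q z) (y : s → τ) :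
    ConvexOn ℝ Set.univ (empiricalRisk ℓ y) := by
  have hsum : ConvexOn ℝ Set.univ (∑ n, fun Z : Matrix o s ℝ => ℓ (Z.col n) (y n)) :=
    Finset.sum_induction _ (ConvexOn ℝ Set.univ) (fun _ _ => ConvexOn.add)
      (convexOn_const 0 convex_univ) fun n _ => (hℓ (y n)).comp_linearMap (colLinearMap ℝ n)
  have hrisk : empiricalRisk ℓ y =
      fun Z => (1 / (Fintype.card s : ℝ)) • (∑ n, fun Z : Matrix o s ℝ => ℓ (Z.col n) (y n)) Z := by
    funext Z
    simp only [empiricalRisk, Finset.sum_apply, smul_eq_mul]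
  exact hrisk ▸ hsum.smul (by positivity)

lemma differentiable_empiricalRisk [Finite o] (hℓ : ∀ z, Differentiable ℝ fun q => ℓ q z)
    (y : s → τ) : Differentiable ℝ (empiricalRisk ℓ y) := by
  have := Fintype.ofFinite o
  have hcol (n : s) : Differentiable ℝ fun Z : Matrix o s ℝ => Z.col n :=
    (colLinearMap ℝ n).toContinuousLinearMap.differentiable
  exact (Differentiable.fun_sum fun n _ => (hℓ (y n)).comp (hcol n)).const_mul _

end EmpiricalRisk

theorem resnest_local_min_strictly_beats_linear_predictor
    (N L M No : ℕ) (hN : 0 < N) (hL : 1 ≤ L) (hM : 0 < M) (hNo : 0 < No)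
    -- feature dimensions, K_0 = N_in is the input dimension
    (K : ℕ → ℕ)
    -- inputs x^n ∈ ℝ^{N_in} and targets y^n ∈ ℝ^{N_o}
    (x : Fin N → Fin (K 0) → ℝ)
    (y : Fin N → Fin No → ℝ)
    -- fixed matrices W_i ∈ ℝ^{M×K_i}, i = 0, …, L−1
    (W : (i : ℕ) → Matrix (Fin M) (Fin (K i)) ℝ)
    -- feature vectors v_i^n ∈ ℝ^{K_i}, with v_0^n = x^n
    (v : (i : ℕ) → Fin N → Fin (K i) → ℝ)
    (hv0 : ∀ n, v 0 n = x n)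
    -- u^n = Σ_{i=0}^{L−1} W_i v_i^n
    (u : Fin N → Fin M → ℝ)
    (hu : ∀ n, u n = ∑ i ∈ Finset.range L, (W i).mulVec (v i n))
    -- the loss function
    (ℓ : (Fin No → ℝ) → (Fin No → ℝ) → ℝ)
    -- Assumption 2: ℓ(yhat, y) is differentiable and convex in yhat for every y
    (hdiff : ∀ yy, Differentiable ℝ (fun yhat => ℓ yhat yy))
    (hconv : ∀ yy, ConvexOn ℝ Set.univ (fun yhat => ℓ yhat yy))
    -- Assumption 3: M ≥ N_o
    (hMNo : M ≥ No)
    -- Assumption 4: (c_0, …, c_{L−1}) ↦ Σ_{i=0}^{L−1} W_i c_i is injective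
    (hinj : Function.Injective
      (fun c : (i : Fin L) → Fin (K i.val) → ℝ => ∑ i : Fin L, (W i.val).mulVec (c i)))
    -- fixed-feature ResNEst empirical risk
    (R : Matrix (Fin M) (Fin (K L)) ℝ × Matrix (Fin No) (Fin M) ℝ → ℝ)
    (hR : ∀ p, R p =
      (1 / (N : ℝ)) * ∑ n, ℓ (p.2.mulVec (u n + p.1.mulVec (v L n))) (y n))
    -- A-ResNEst empirical risk
    (A : ((i : Fin (L + 1)) → Matrix (Fin No) (Fin (K i.val)) ℝ) → ℝ)
    (hA : ∀ H, A H =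
      (1 / (N : ℝ)) * ∑ n, ℓ (∑ i : Fin (L + 1), (H i).mulVec (v i.val n)) (y n))
    -- the nonlinear features strictly help:
    -- inf over all (H_0, …, H_L) < inf over (H_0, 0, …, 0)
    (hstrict : (⨅ H, A H) <
      ⨅ H0 : Matrix (Fin No) (Fin (K 0)) ℝ,
        A (Function.update (0 : (i : Fin (L + 1)) → Matrix (Fin No) (Fin (K i.val)) ℝ)
            ⟨0, Nat.succ_pos L⟩ H0))
    -- a local minimizer of R
    (p : Matrix (Fin M) (Fin (K L)) ℝ × Matrix (Fin No) (Fin M) ℝ)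
    (hp : IsLocalMin R p) :
    ∀ A' : Matrix (Fin No) (Fin (K 0)) ℝ,
      R p < (1 / (N : ℝ)) * ∑ n, ℓ (A'.mulVec (x n)) (y n) := by
  let X (i : ℕ) : Matrix (Fin (K i)) (Fin N) ℝ := (Matrix.of (v i))ᵀ
  let U : Matrix (Fin M) (Fin N) ℝ := ∑ i : Fin L, W i * X i
  have hUcol (n) : U.col n = u n := by
    rw [hu, Finset.sum_range]
    exact col_sum_mul _ _ n
  have hR' : R = empiricalRisk ℓ y ∘ resnestOutput U (X L) := by
    funext q
    simp only [hR, ← hUcol, Function.comp_apply, empiricalRisk, Fintype.card_fin]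
    rfl
  have hA' (H) : A H = empiricalRisk ℓ y (∑ i : Fin (L + 1), H i * X i) := by
    simp only [hA, empiricalRisk, Fintype.card_fin, col_sum_mul]
    rfl
  have hle (H) : R p ≤ A H := by
    rw [hR', hA', Fin.sum_univ_castSucc]
    exact isLocalMin_resnest_le_aresnest hinj rfl (convexOn_empiricalRisk hconv y)
      (fun _ => (differentiable_empiricalRisk hdiff y _).hasFDerivAt.hasLineDerivAt _)
      (by simpa using hMNo) (hR' ▸ hp) _ _
  intro A'
  have hlinear := lt_of_forall_le_of_ciInf_lt_ciInf hle (fun _ => hle _) hstrict A'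
  rw [hA', sum_update_zero_mul, empiricalRisk, Fintype.card_fin] at hlinear
  simp only [← hv0]
  exact hlinear
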